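/- There exists a subspace X of the Cantor set 2^ω such that X is not Polish and X^ω is countable dense homogeneous. -/

import Mathlib

/-- A space is countable dense homogeneous (CDH) if for every pair of countable
dense subsets `A`, `B` there is a homeomorphism of the space onto itself
mapping `A` onto `B`. -/
def IsCDH (X : Type*) [TopologicalSpace X] : Prop :=
  ∀ A B : Set X, A.Countable → Dense A → B.Countable → Dense B →
    ∃ h : X ≃ₜ X, h '' A = B

/-!
The space `X` is a copy in `2^ω` of the complement of an uncountable λ'-set `Y ⊆ ω^ω` which is
invariant under changes of finitely many coordinates.

Let `Z = Yᶜ`. As `Y` is a λ'-set, every countable subset of `Z` lies in a Gδ subset `G` of `ω^ω`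
contained in `Z`, and this property, like invariance under finite changes, passes to countable
powers. To map one countable dense subset `A` of such a space `Z` onto another one `B`, let `G`
contain all finite modifications of points of `A ∪ B` and write `Gᶜ` as the increasing union of
closed sets `K n`. A back-and-forth construction approximates the required autohomeomorphism of
`ω^ω` by homeomorphisms which move all but finitely many points in finitely many coordinates only.
Since `K n` avoids the points still to be treated, the `n`-th approximation can be frozen on `K n`
and on the preimage of `K n`. The limit therefore changes points outside `G`, and points sent
outside `G`, in finitely many coordinates only, so that it preserves `Z`.

If `X` were Polish, then `Y` would be an uncountable Borel set and would contain a Cantor set, but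
a countable dense subset of a Cantor set is not Gδ in it.

To find `Y`, let `e i`, for `i < 𝔟`, be an unbounded family and let `f i` dominate all `e j` with
`j ≤ i`. Then `Y` consists of the finite modifications of the `f i`. A countable set `D` is
dominated by some `g`, and some `e i` is not, so the Gδ set `{x | ¬ e i ≤* x}` contains `D`. It
meets `Y` only in finite modifications of `f j` for `j < i`, and these are fewer than `𝔟`, hence
form a λ'-set.
-/

open Set Filter Topology Cardinal PiNat

section Cylinder

variable {E : ℕ → Type*} [∀ i, TopologicalSpace (E i)]

theorem tendsto_of_mem_cylinder {ι : Type*} {l : Filter ι} {u : ι → ∀ i, E i} {x : ∀ i, E i}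
    {n : ι → ℕ} (hn : Tendsto n l atTop) (hu : ∀ k, u k ∈ cylinder x (n k)) :
    Tendsto u l (𝓝 x) := by
  refine tendsto_pi_nhds.2 fun i => tendsto_const_nhds.congr' ?_
  filter_upwards [hn.eventually_gt_atTop i] with k hk
  exact (mem_cylinder_iff.1 (hu k) i hk).symm

variable [∀ i, DiscreteTopology (E i)]

theorem isClopen_cylinder (x : ∀ i, E i) (n : ℕ) : IsClopen (cylinder x n) := by
  refine ⟨?_, isOpen_cylinder E x n⟩
  rw [cylinder_eq_pi]
  exact isClosed_set_pi fun i _ => isClosed_discrete {x i}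

theorem exists_cylinder_subset_of_mem_nhds {x : ∀ i, E i} {U : Set (∀ i, E i)} (hU : U ∈ 𝓝 x)
    (n : ℕ) : ∃ m, n ≤ m ∧ cylinder x m ⊆ U := by
  obtain ⟨_, ⟨y, k, rfl⟩, hxy, hyU⟩ := (isTopologicalBasis_cylinders E).mem_nhds_iff.1 hU
  rw [← mem_cylinder_iff_eq.1 hxy] at hyU
  exact ⟨max n k, le_max_left n k, (cylinder_anti x (le_max_right n k)).trans hyU⟩

end Cylinder

section TailEquality

variable {α : Type*}

/-- The set of sequences that agree with some element of `S` in all but finitely many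
coordinates. -/
def tailSaturation (S : Set (ℕ → α)) : Set (ℕ → α) :=
  {x | ∃ s ∈ S, x =ᶠ[atTop] s}

/-- A tail set is a set of sequences invariant under changes of finitely many coordinates. -/
def IsTailSet (Z : Set (ℕ → α)) : Prop :=
  ∀ ⦃x y⦄, x =ᶠ[atTop] y → x ∈ Z → y ∈ Z

theorem subset_tailSaturation (S : Set (ℕ → α)) : S ⊆ tailSaturation S :=
  fun s hs => ⟨s, hs, EventuallyEq.rfl⟩

theorem tailSaturation_mono {S T : Set (ℕ → α)} (h : S ⊆ T) :
    tailSaturation S ⊆ tailSaturation T :=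
  fun _ ⟨s, hs, hxs⟩ => ⟨s, h hs, hxs⟩

theorem tailSaturation_eq_biUnion (S : Set (ℕ → α)) :
    tailSaturation S = ⋃ s ∈ S, {x | x =ᶠ[atTop] s} := by
  ext x
  simp only [tailSaturation, mem_ofPred_eq, mem_iUnion, exists_prop]

theorem isTailSet_tailSaturation (S : Set (ℕ → α)) : IsTailSet (tailSaturation S) :=
  fun _ _ hxy ⟨s, hs, hxs⟩ => ⟨s, hs, hxy.symm.trans hxs⟩

theorem IsTailSet.compl {Z : Set (ℕ → α)} (hZ : IsTailSet Z) : IsTailSet Zᶜ :=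
  fun _ _ hxy hx hy => hx (hZ hxy.symm hy)

theorem IsTailSet.tailSaturation_subset {S Z : Set (ℕ → α)} (hZ : IsTailSet Z) (hS : S ⊆ Z) :
    tailSaturation S ⊆ Z :=
  fun _ ⟨_, hs, hxs⟩ => hZ hxs.symm (hS hs)

theorem countable_setOf_eventuallyEq [Countable α] (s : ℕ → α) :
    {x : ℕ → α | x =ᶠ[atTop] s}.Countable := by
  let overwrite (N : ℕ) (v : Fin N → α) (i : ℕ) : α := if h : i < N then v ⟨i, h⟩ else s i
  refine (countable_iUnion fun N => countable_range (overwrite N)).mono fun x hx => ?_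
  obtain ⟨N, hN⟩ := eventually_atTop.1 hx
  refine mem_iUnion.2 ⟨N, fun i => x i, funext fun i => ?_⟩
  by_cases hi : i < N
  · simp only [overwrite, hi, dite_true]
  · simp only [overwrite, hi, dite_false, hN i (not_lt.1 hi)]

theorem countable_tailSaturation [Countable α] {S : Set (ℕ → α)} (hS : S.Countable) :
    (tailSaturation S).Countable := by
  rw [tailSaturation_eq_biUnion]
  exact hS.biUnion fun s _ => countable_setOf_eventuallyEq s

end TailEquality

section PathSwap

variable {α : Type*}

open Classical in
/-- The transformation of sequences that carries `p` to `q` by transposing `p i` and `q i` in the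
`i`-th coordinate of `x` for as long as `x` follows `p` below `i`. Every `x ≠ p` leaves `p`, so it
is altered in finitely many coordinates only. -/
noncomputable def pathSwap (p q x : ℕ → α) : ℕ → α := fun i =>
  if x ∈ cylinder p i then Equiv.swap (p i) (q i) (x i) else x i

theorem pathSwap_mem_cylinder_iff {p q x : ℕ → α} {n : ℕ} :
    pathSwap p q x ∈ cylinder q n ↔ x ∈ cylinder p n := by
  classical
  induction n with
  | zero => simp only [cylinder_zero, mem_univ]
  | succ n ih =>
    simp only [mem_cylinder_iff, Nat.forall_lt_succ_right] at ih ⊢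
    rw [ih]
    refine and_congr_right fun hx => ?_
    rw [pathSwap, if_pos (mem_cylinder_iff.2 hx), Equiv.swap_apply_eq_iff, Equiv.swap_apply_right]

theorem pathSwap_pathSwap (p q x : ℕ → α) : pathSwap q p (pathSwap p q x) = x := by
  classical
  funext i
  rw [pathSwap]
  simp only [pathSwap_mem_cylinder_iff]
  by_cases hx : x ∈ cylinder p i
  · rw [if_pos hx, pathSwap, if_pos hx, Equiv.swap_comm, Equiv.swap_apply_self]
  · rw [if_neg hx, pathSwap, if_neg hx]

theorem pathSwap_self (p q : ℕ → α) : pathSwap p q p = q := by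
  classical
  funext i
  rw [pathSwap, if_pos (self_mem_cylinder p i), Equiv.swap_apply_left]

theorem pathSwap_eventuallyEq {p q x : ℕ → α} (hx : x ≠ p) : pathSwap p q x =ᶠ[atTop] x := by
  filter_upwards [eventually_gt_atTop (firstDiff x p)] with i hi
  exact if_neg fun h => apply_firstDiff_ne hx (mem_cylinder_iff.1 h _ hi)

theorem pathSwap_mem_cylinder {p q : ℕ → α} {n : ℕ} (hq : q ∈ cylinder p n) (x : ℕ → α) :
    pathSwap p q x ∈ cylinder x n := by
  classical
  refine mem_cylinder_iff.2 fun i hi => ?_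
  rw [pathSwap, mem_cylinder_iff.1 hq i hi, Equiv.swap_self, Equiv.refl_apply, ite_self]

theorem pathSwap_of_notMem_cylinder {p q x : ℕ → α} {n : ℕ} (hq : q ∈ cylinder p n)
    (hx : x ∉ cylinder p n) : pathSwap p q x = x := by
  funext i
  rcases lt_or_ge i n with hi | hi
  · exact mem_cylinder_iff.1 (pathSwap_mem_cylinder hq x) i hi
  · exact if_neg fun h => hx (cylinder_anti p hi h)

variable [TopologicalSpace α] [DiscreteTopology α]

theorem continuous_pathSwap (p q : ℕ → α) : Continuous (pathSwap p q) := by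
  classical
  refine continuous_pi fun i => ?_
  refine Continuous.if (fun x hx => ?_)
    (continuous_of_discreteTopology.comp (continuous_apply i)) (continuous_apply i)
  have : x ∈ frontier (cylinder p i) := hx
  simp [(isClopen_cylinder (E := fun _ => α) p i).frontier_eq] at this

/-- `pathSwap p q` as a homeomorphism, with inverse `pathSwap q p`. -/
noncomputable def pathSwapHomeomorph (p q : ℕ → α) : (ℕ → α) ≃ₜ (ℕ → α) where
  toFun := pathSwap p q
  invFun := pathSwap q p
  left_inv := pathSwap_pathSwap p q
  right_inv := pathSwap_pathSwap q p
  continuous_toFun := continuous_pathSwap p q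
  continuous_invFun := continuous_pathSwap q p

theorem eventually_exists_homeomorph_apply_eq (h : (ℕ → α) ≃ₜ (ℕ → α)) {F : Set (ℕ → α)}
    (hF : IsClosed F) {a : ℕ → α} (ha : a ∉ F) (n : ℕ) :
    ∀ᶠ b in 𝓝 (h a), ∃ h' : (ℕ → α) ≃ₜ (ℕ → α), h' a = b ∧ EqOn h' h F ∧
      (∀ x, h' x ∈ cylinder (h x) n) ∧ (∀ y, h'.symm y ∈ cylinder (h.symm y) n) ∧
      ∀ x ≠ a, h' x =ᶠ[atTop] h x := by
  have hU : (h '' F)ᶜ ∩ h.symm ⁻¹' cylinder a n ∈ 𝓝 (h a) := by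
    refine IsOpen.mem_nhds (((h.isClosed_image.2 hF).isOpen_compl).inter
      ((isOpen_cylinder (fun _ => α) a n).preimage h.symm.continuous)) ⟨?_, ?_⟩
    · rwa [mem_compl_iff, h.injective.mem_set_image]
    · rw [mem_preimage, h.symm_apply_apply]
      exact self_mem_cylinder a n
  obtain ⟨m, hnm, hmU⟩ := exists_cylinder_subset_of_mem_nhds hU n
  filter_upwards [(isOpen_cylinder (fun _ => α) (h a) m).mem_nhds (self_mem_cylinder _ m)]
    with b hb
  have hb' : h a ∈ cylinder b m := (mem_cylinder_comm _ _ _).1 hb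
  refine ⟨h.trans (pathSwapHomeomorph (h a) b), pathSwap_self _ _, fun x hx => ?_, fun x => ?_,
    fun y => ?_, fun x hx => pathSwap_eventuallyEq (h.injective.ne hx)⟩
  · exact pathSwap_of_notMem_cylinder hb fun hxa => (hmU hxa).1 (mem_image_of_mem h hx)
  · exact cylinder_anti _ hnm (pathSwap_mem_cylinder hb _)
  · change h.symm (pathSwap b (h a) y) ∈ cylinder (h.symm y) n
    by_cases hy : y ∈ cylinder b m
    · have hya : y ∈ cylinder (h a) m := by rwa [mem_cylinder_iff_eq.1 hb] at hy
      have hya' : pathSwap b (h a) y ∈ cylinder (h a) m := pathSwap_mem_cylinder_iff.2 hy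
      rw [mem_cylinder_iff_eq.1 (hmU hya).2]
      exact (hmU hya').2
    · rw [pathSwap_of_notMem_cylinder hb' hy]
      exact self_mem_cylinder _ n

end PathSwap

section Approximation

theorem exists_orderHom_isClosed_iUnion_eq_compl {X : Type*} [TopologicalSpace X] {G : Set X}
    (hG : IsGδ G) : ∃ K : ℕ →o Set X, (∀ n, IsClosed (K n)) ∧ ⋃ n, K n = Gᶜ := by
  obtain ⟨U, hU, rfl⟩ := hG.eq_iInter_nat
  refine ⟨partialSups fun n => (U n)ᶜ, fun n => ?_, ?_⟩
  · rw [partialSups_eq_biSup]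
    exact (finite_Iic n).isClosed_biUnion fun i _ => (hU i).isClosed_compl
  · rw [compl_iInter]
    exact iSup_partialSups_eq _

variable {α : Type*} [TopologicalSpace α]

/-- A stage of the back-and-forth construction of a homeomorphism taking `A` onto `B`: a
homeomorphism that sends the finite set `dom ⊆ A` into `B` and moves every other point in finitely
many coordinates only. The increasing sequence `K` of closed sets matters only for the order, which
asks extensions not to change the homeomorphism on points sitting in, or sent to, `K level`. -/
@[ext]
structure BackAndForth (A B : Set (ℕ → α)) (K : ℕ →o Set (ℕ → α)) where
  level : ℕ
  toHomeomorph : (ℕ → α) ≃ₜ (ℕ → α)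
  dom : Set (ℕ → α)
  finite_dom : dom.Finite
  dom_subset : dom ⊆ A
  mapsTo : MapsTo toHomeomorph dom B
  eventuallyEq : ∀ x ∉ dom, toHomeomorph x =ᶠ[atTop] x

namespace BackAndForth

variable {A B : Set (ℕ → α)} {K : ℕ →o Set (ℕ → α)}

/-- The points whose images are the same in all extensions of the stage `p`. -/
def frozen (p : BackAndForth A B K) : Set (ℕ → α) :=
  p.dom ∪ K p.level ∪ p.toHomeomorph ⁻¹' K p.level

/-- The order by extension. Extensions agree with the original up to coordinate `level`, in both
directions, which makes increasing sequences converge to homeomorphisms. -/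
instance : Preorder (BackAndForth A B K) where
  le p q := p.level ≤ q.level ∧ p.dom ⊆ q.dom ∧ EqOn q.toHomeomorph p.toHomeomorph p.frozen ∧
    (∀ x, q.toHomeomorph x ∈ cylinder (p.toHomeomorph x) p.level) ∧
    ∀ y, q.toHomeomorph.symm y ∈ cylinder (p.toHomeomorph.symm y) p.level
  le_refl p := ⟨le_rfl, Subset.rfl, eqOn_refl _ _, fun _ => self_mem_cylinder _ _,
    fun _ => self_mem_cylinder _ _⟩
  le_trans p q r := by
    rintro ⟨hpq, hdpq, hepq, hcpq, hspq⟩ ⟨hqr, hdqr, heqr, hcqr, hsqr⟩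
    have hfrozen : p.frozen ⊆ q.frozen := by
      rintro x ((hx | hx) | hx)
      · exact Or.inl (Or.inl (hdpq hx))
      · exact Or.inl (Or.inr (K.monotone hpq hx))
      · refine Or.inr (K.monotone hpq ?_)
        rwa [hepq (Or.inr hx)]
    refine ⟨hpq.trans hqr, hdpq.trans hdqr, (heqr.mono hfrozen).trans hepq, fun x => ?_,
      fun y => ?_⟩
    · rw [← mem_cylinder_iff_eq.1 (hcpq x)]
      exact cylinder_anti _ hpq (hcqr x)
    · rw [← mem_cylinder_iff_eq.1 (hspq y)]
      exact cylinder_anti _ hpq (hsqr y)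

/-- The inverse stage, exchanging the roles of `A` and `B`. -/
@[simps]
def symm (p : BackAndForth A B K) : BackAndForth B A K where
  level := p.level
  toHomeomorph := p.toHomeomorph.symm
  dom := p.toHomeomorph '' p.dom
  finite_dom := p.finite_dom.image _
  dom_subset := p.mapsTo.image_subset
  mapsTo := by
    rintro _ ⟨x, hx, rfl⟩
    rw [p.toHomeomorph.symm_apply_apply]
    exact p.dom_subset hx
  eventuallyEq y hy := by
    refine EventuallyEq.symm ?_
    conv_lhs => rw [← p.toHomeomorph.apply_symm_apply y]
    exact p.eventuallyEq _ fun h => hy ⟨_, h, p.toHomeomorph.apply_symm_apply y⟩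

theorem symm_symm (p : BackAndForth A B K) : p.symm.symm = p :=
  BackAndForth.ext rfl rfl (p.toHomeomorph.toEquiv.symm_image_image p.dom)

theorem mem_frozen_symm {p : BackAndForth A B K} {x : ℕ → α} :
    p.toHomeomorph x ∈ p.symm.frozen ↔ x ∈ p.frozen := by
  simp only [frozen, symm_dom, symm_level, symm_toHomeomorph, mem_union, mem_preimage,
    p.toHomeomorph.injective.mem_set_image, Homeomorph.symm_apply_apply]
  tauto

theorem symm_le_symm {p q : BackAndForth A B K} (hpq : p ≤ q) : p.symm ≤ q.symm := by
  obtain ⟨hlevel, hdom, heq, hcyl, hcyl'⟩ := hpq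
  refine ⟨hlevel, ?_, fun y hy => ?_, hcyl', hcyl⟩
  · rintro _ ⟨x, hx, rfl⟩
    exact ⟨x, hdom hx, heq (Or.inl (Or.inl hx))⟩
  · obtain ⟨x, rfl⟩ := p.toHomeomorph.surjective y
    rw [mem_frozen_symm] at hy
    rw [symm_toHomeomorph, symm_toHomeomorph, p.toHomeomorph.symm_apply_apply, ← heq hy,
      q.toHomeomorph.symm_apply_apply]

theorem exists_ge_level (p : BackAndForth A B K) (n : ℕ) : ∃ q ≥ p, n ≤ q.level :=
  ⟨{ p with level := max p.level n }, ⟨le_max_left _ _, Subset.rfl, eqOn_refl _ _,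
    fun _ => self_mem_cylinder _ _, fun _ => self_mem_cylinder _ _⟩, le_max_right _ _⟩

theorem exists_continuous_limit {u : ℕ → BackAndForth A B K} (hu : Monotone u)
    (hlevel : Tendsto (fun k => (u k).level) atTop atTop) :
    ∃ f : (ℕ → α) → ℕ → α, Continuous f ∧
      ∀ k x, (u k).toHomeomorph x ∈ cylinder (f x) (u k).level := by
  choose k hk using fun i => (hlevel.eventually_gt_atTop i).exists
  refine ⟨fun x i => (u (k i)).toHomeomorph x i, continuous_pi fun i =>
    (continuous_apply i).comp (u (k i)).toHomeomorph.continuous, fun m x => ?_⟩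
  refine mem_cylinder_iff.2 fun i hi => ?_
  rcases le_total m (k i) with h | h
  · exact (mem_cylinder_iff.1 ((hu h).2.2.2.1 x) i hi).symm
  · exact mem_cylinder_iff.1 ((hu h).2.2.2.1 x) i (hk i)

variable [DiscreteTopology α]

theorem isClosed_frozen (hK : ∀ n, IsClosed (K n)) (p : BackAndForth A B K) :
    IsClosed p.frozen :=
  (p.finite_dom.isClosed.union (hK _)).union ((hK _).preimage p.toHomeomorph.continuous)

theorem exists_ge_mem_dom (hK : ∀ n, IsClosed (K n))
    (hAK : ∀ n, Disjoint (tailSaturation A) (K n)) (hAB : tailSaturation A ⊆ closure B)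
    (p : BackAndForth A B K) {a : ℕ → α} (ha : a ∈ A) : ∃ q ≥ p, a ∈ q.dom := by
  by_cases hdom : a ∈ p.dom
  · exact ⟨p, le_rfl, hdom⟩
  have hpa : p.toHomeomorph a ∈ tailSaturation A := ⟨a, ha, p.eventuallyEq a hdom⟩
  have hfrozen : a ∉ p.frozen := by
    rintro ((h | h) | h)
    · exact hdom h
    · exact disjoint_left.1 (hAK _) (subset_tailSaturation A ha) h
    · exact disjoint_left.1 (hAK _) hpa h
  obtain ⟨b, hbB, h, hab, heq, hcyl, hcyl', htail⟩ :=
    ((mem_closure_iff_frequently.1 (hAB hpa)).and_eventually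
      (eventually_exists_homeomorph_apply_eq p.toHomeomorph (p.isClosed_frozen hK) hfrozen
        p.level)).exists
  refine ⟨⟨p.level, h, insert a p.dom, p.finite_dom.insert a, insert_subset ha p.dom_subset,
    ?_, fun x hx => ?_⟩, ⟨le_rfl, subset_insert _ _, heq, hcyl, hcyl'⟩, mem_insert _ _⟩
  · rintro x (rfl | hx)
    · rwa [hab]
    · rw [heq (Or.inl (Or.inl hx))]
      exact p.mapsTo hx
  · obtain ⟨hxa, hxp⟩ := not_or.1 hx
    exact (htail x hxa).trans (p.eventuallyEq x hxp)

theorem exists_ge_mem_symm_dom (hK : ∀ n, IsClosed (K n))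
    (hBK : ∀ n, Disjoint (tailSaturation B) (K n)) (hBA : tailSaturation B ⊆ closure A)
    (p : BackAndForth A B K) {b : ℕ → α} (hb : b ∈ B) : ∃ q ≥ p, b ∈ q.symm.dom := by
  obtain ⟨q, hpq, hbq⟩ := p.symm.exists_ge_mem_dom hK hBK hBA hb
  refine ⟨q.symm, ?_, by rwa [symm_symm]⟩
  rw [← p.symm_symm]
  exact symm_le_symm hpq

theorem leftInverse_of_mem_cylinder {u : ℕ → BackAndForth A B K}
    (hlevel : Tendsto (fun k => (u k).level) atTop atTop) {f g : (ℕ → α) → ℕ → α}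
    (hf : ∀ k x, (u k).toHomeomorph x ∈ cylinder (f x) (u k).level) (hg : Continuous g)
    (hfg : ∀ k y, (u k).toHomeomorph.symm y ∈ cylinder (g y) (u k).level) :
    Function.LeftInverse g f := by
  intro x
  have hlim : Tendsto (fun k => (u k).toHomeomorph x) atTop (𝓝 (f x)) :=
    tendsto_of_mem_cylinder hlevel fun k => hf k x
  refine tendsto_nhds_unique ((hg.tendsto _).comp hlim)
    (tendsto_of_mem_cylinder hlevel fun k => (mem_cylinder_comm _ _ _).1 ?_)
  simpa only [Function.comp_apply, Homeomorph.symm_apply_apply] using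
    hfg k ((u k).toHomeomorph x)

theorem exists_limit {u : ℕ → BackAndForth A B K} (hu : Monotone u)
    (hlevel : Tendsto (fun k => (u k).level) atTop atTop) :
    ∃ h : (ℕ → α) ≃ₜ (ℕ → α), ∀ k, EqOn h (u k).toHomeomorph (u k).frozen := by
  obtain ⟨f, hf, hfu⟩ := exists_continuous_limit hu hlevel
  obtain ⟨g, hg, hgu⟩ :=
    exists_continuous_limit (u := fun k => (u k).symm) (fun _ _ h => symm_le_symm (hu h)) hlevel
  have hgf : Function.LeftInverse g f := leftInverse_of_mem_cylinder hlevel hfu hg hgu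
  have hfg : Function.LeftInverse f g :=
    leftInverse_of_mem_cylinder (u := fun k => (u k).symm) hlevel hgu hf hfu
  refine ⟨⟨⟨f, g, hgf, hfg⟩, hf, hg⟩, fun k x hx => ?_⟩
  have hlim : Tendsto (fun m => (u m).toHomeomorph x) atTop (𝓝 (f x)) :=
    tendsto_of_mem_cylinder hlevel fun m => hfu m x
  refine tendsto_nhds_unique hlim (tendsto_const_nhds.congr' ?_)
  filter_upwards [eventually_ge_atTop k] with m hm
  exact ((hu hm).2.2.1 hx).symm

instance : Inhabited (BackAndForth A B K) where
  default :=
    { level := 0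
      toHomeomorph := .refl _
      dom := ∅
      finite_dom := finite_empty
      dom_subset := empty_subset A
      mapsTo := mapsTo_empty _ B
      eventuallyEq := fun _ _ => EventuallyEq.rfl }

theorem exists_monotone_exhausting (hA : A.Countable) (hB : B.Countable)
    (hK : ∀ n, IsClosed (K n)) (hABK : ∀ n, Disjoint (tailSaturation (A ∪ B)) (K n))
    (hAB : tailSaturation A ⊆ closure B) (hBA : tailSaturation B ⊆ closure A) :
    ∃ u : ℕ → BackAndForth A B K, Monotone u ∧ (∀ a ∈ A, ∃ k, a ∈ (u k).dom) ∧
      (∀ b ∈ B, ∃ k, b ∈ (u k).symm.dom) ∧ Tendsto (fun k => (u k).level) atTop atTop := by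
  have hAK n := (hABK n).mono_left (tailSaturation_mono subset_union_left)
  have hBK n := (hABK n).mono_left (tailSaturation_mono subset_union_right)
  have := hA.toEncodable
  have := hB.toEncodable
  let goal : A ⊕ B ⊕ ℕ → Order.Cofinal (BackAndForth A B K)
    | .inl a => ⟨{p | a.1 ∈ p.dom}, fun p =>
        (p.exists_ge_mem_dom hK hAK hAB a.2).imp fun _ => And.symm⟩
    | .inr (.inl b) => ⟨{p | b.1 ∈ p.symm.dom}, fun p =>
        (p.exists_ge_mem_symm_dom hK hBK hBA b.2).imp fun _ => And.symm⟩
    | .inr (.inr n) => ⟨{p | n ≤ p.level}, fun p => (p.exists_ge_level n).imp fun _ => And.symm⟩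
  have hmono := Order.sequenceOfCofinals.monotone default goal
  have hmem := Order.sequenceOfCofinals.encode_mem default goal
  exact ⟨_, hmono, fun a ha => ⟨_, hmem (.inl ⟨a, ha⟩)⟩,
    fun b hb => ⟨_, hmem (.inr (.inl ⟨b, hb⟩))⟩,
    tendsto_atTop_atTop_of_monotone (fun _ _ h => (hmono h).1)
      fun n => ⟨_, hmem (.inr (.inr n))⟩⟩

end BackAndForth

theorem exists_homeomorph_image_eq_of_isGδ [DiscreteTopology α] {A B G : Set (ℕ → α)}
    (hA : A.Countable) (hB : B.Countable) (hAB : tailSaturation A ⊆ closure B)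
    (hBA : tailSaturation B ⊆ closure A) (hG : IsGδ G) (hABG : tailSaturation (A ∪ B) ⊆ G) :
    ∃ h : (ℕ → α) ≃ₜ (ℕ → α), h '' A = B ∧ ∀ x, x ∉ G ∨ h x ∉ G → h x =ᶠ[atTop] x := by
  obtain ⟨K, hK, hKG⟩ := exists_orderHom_isClosed_iUnion_eq_compl hG
  have hABK n : Disjoint (tailSaturation (A ∪ B)) (K n) :=
    disjoint_compl_right.mono hABG ((subset_iUnion K n).trans hKG.subset)
  obtain ⟨u, hu, hAu, hBu, hlevel⟩ :=
    BackAndForth.exists_monotone_exhausting hA hB hK hABK hAB hBA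
  obtain ⟨h, hh⟩ := BackAndForth.exists_limit hu hlevel
  have hmapsTo : MapsTo h A B := fun a ha => by
    obtain ⟨k, hk⟩ := hAu a ha
    rw [hh k (Or.inl (Or.inl hk))]
    exact (u k).mapsTo hk
  have hABsub : A ∪ B ⊆ G := (subset_tailSaturation _).trans hABG
  have htail : ∀ k, ∀ x ∈ (u k).frozen, x ∉ A → h x =ᶠ[atTop] x := fun k x hx hxA => by
    rw [hh k hx]
    exact (u k).eventuallyEq x fun hdom => hxA ((u k).dom_subset hdom)
  have hlate : ∀ x ∉ G, ∃ k, x ∈ K (u k).level := fun x hx => by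
    obtain ⟨n, hn⟩ := mem_iUnion.1 (hKG.symm.subset hx)
    obtain ⟨k, hk⟩ := (hlevel.eventually_ge_atTop n).exists
    exact ⟨k, K.monotone hk hn⟩
  refine ⟨h, hmapsTo.image_subset.antisymm fun b hb => ?_, fun x => ?_⟩
  · obtain ⟨k, a, ha, rfl⟩ := hBu b hb
    exact ⟨a, (u k).dom_subset ha, hh k (Or.inl (Or.inl ha))⟩
  · rintro (hx | hx)
    · obtain ⟨k, hk⟩ := hlate x hx
      exact htail k x (Or.inl (Or.inr hk)) fun hA => hx (hABsub (Or.inl hA))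
    · obtain ⟨k, hk⟩ := hlate _ hx
      have hfrozen : (u k).toHomeomorph.symm (h x) ∈ (u k).frozen := by
        refine Or.inr ?_
        rwa [mem_preimage, Homeomorph.apply_symm_apply]
      have hsymm : (u k).toHomeomorph.symm (h x) = x := by
        refine h.injective ?_
        rw [hh k hfrozen, Homeomorph.apply_symm_apply]
      rw [hsymm] at hfrozen
      exact htail k x hfrozen fun hA => hx (hABsub (Or.inr (hmapsTo hA)))

end Approximation

section CountablyControlled

variable {V W : Type*} [TopologicalSpace V] [TopologicalSpace W]

/-- A subset `Z` of a space is countably controlled if each of its countable subsets is contained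
in a Gδ subset of the whole space lying inside `Z`. -/
def CountablyControlled (Z : Set W) : Prop :=
  ∀ D ⊆ Z, D.Countable → ∃ G, IsGδ G ∧ D ⊆ G ∧ G ⊆ Z

theorem CountablyControlled.preimage {Z : Set W} (hZ : CountablyControlled Z) {f : V → W}
    (hf : Continuous f) : CountablyControlled (f ⁻¹' Z) := fun D hDZ hD => by
  obtain ⟨G, hG, hDG, hGZ⟩ := hZ (f '' D) (image_subset_iff.2 hDZ) (hD.image f)
  exact ⟨f ⁻¹' G, hG.preimage hf, image_subset_iff.1 hDG, preimage_mono hGZ⟩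

theorem CountablyControlled.iInter {ι : Type*} [Countable ι] {Z : ι → Set W}
    (hZ : ∀ i, CountablyControlled (Z i)) : CountablyControlled (⋂ i, Z i) := fun D hDZ hD => by
  choose G hG hDG hGZ using fun i => hZ i D (hDZ.trans (iInter_subset Z i)) hD
  exact ⟨⋂ i, G i, .iInter hG, subset_iInter hDG, iInter_mono hGZ⟩

theorem IsCDH.of_homeomorph (e : V ≃ₜ W) (hW : IsCDH W) : IsCDH V := by
  intro A B hA hAd hB hBd
  obtain ⟨h, hh⟩ := hW (e '' A) (e '' B) (hA.image e) (e.surjective.denseRange.dense_image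
    e.continuous hAd) (hB.image e) (e.surjective.denseRange.dense_image e.continuous hBd)
  refine ⟨(e.trans h).trans e.symm, ?_⟩
  change (e.symm ∘ h ∘ e) '' A = B
  rw [image_comp, image_comp, hh]
  exact e.toEquiv.symm_image_image B

end CountablyControlled

section Power

variable {α : Type*}

/-- The `i`-th of the sequences coded by `z` through the pairing function of `ℕ`. -/
def row (i : ℕ) (z : ℕ → α) : ℕ → α := fun j => z (Nat.pair i j)

/-- The inverse of `row`. -/
def ofRows (x : ℕ → ℕ → α) : ℕ → α := fun k => x k.unpair.1 k.unpair.2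

theorem row_ofRows (x : ℕ → ℕ → α) (i : ℕ) : row i (ofRows x) = x i := by
  funext j
  rw [row, ofRows, Nat.unpair_pair]

theorem ofRows_row (z : ℕ → α) : ofRows (fun i => row i z) = z := by
  funext k
  rw [ofRows, row, Nat.pair_unpair]

theorem IsTailSet.iInter_row {Z : Set (ℕ → α)} (hZ : IsTailSet Z) :
    IsTailSet (⋂ i, row i ⁻¹' Z) := fun x y hxy hx => by
  refine mem_iInter.2 fun i => hZ ?_ (mem_iInter.1 hx i)
  exact (tendsto_atTop_mono (Nat.right_le_pair i) tendsto_id).eventually hxy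

variable [TopologicalSpace α]

theorem continuous_row (i : ℕ) : Continuous (row i : (ℕ → α) → ℕ → α) :=
  continuous_pi fun _ => continuous_apply _

theorem continuous_ofRows : Continuous (ofRows : (ℕ → ℕ → α) → ℕ → α) :=
  continuous_pi fun k => (continuous_apply k.unpair.2).comp (continuous_apply k.unpair.1)

/-- The coding of sequences of elements of `Z` by single sequences. -/
def rowsHomeomorph (Z : Set (ℕ → α)) : (ℕ → Z) ≃ₜ (⋂ i, row i ⁻¹' Z : Set (ℕ → α)) where
  toFun x := ⟨ofRows fun i => x i, mem_iInter.2 fun i => by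
    rw [mem_preimage, row_ofRows]
    exact (x i).2⟩
  invFun z i := ⟨row i z.1, mem_iInter.1 z.2 i⟩
  left_inv x := funext fun i => Subtype.ext (row_ofRows (fun i => (x i).1) i)
  right_inv z := Subtype.ext (ofRows_row z.1)
  continuous_toFun := .subtype_mk
    (continuous_ofRows.comp <| .piMap fun _ => continuous_subtype_val) _
  continuous_invFun := continuous_pi fun i => .subtype_mk
    ((continuous_row i).comp continuous_subtype_val) _

variable [DiscreteTopology α] [Countable α]

theorem CountablyControlled.isCDH {Z : Set (ℕ → α)} (hZ : CountablyControlled Z)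
    (htail : IsTailSet Z) : IsCDH Z := by
  intro A B hA hAd hB hBd
  have hclosure {C D : Set Z} (hD : Dense D) :
      tailSaturation (Subtype.val '' C) ⊆ closure (Subtype.val '' D) :=
    (htail.tailSaturation_subset (Subtype.coe_image_subset Z C)).trans
      (Subtype.dense_iff.1 hD)
  obtain ⟨G, hG, hABG, hGZ⟩ := hZ (tailSaturation (Subtype.val '' A ∪ Subtype.val '' B))
    (htail.tailSaturation_subset (union_subset (Subtype.coe_image_subset Z A)
      (Subtype.coe_image_subset Z B)))
    (countable_tailSaturation ((hA.image _).union (hB.image _)))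
  obtain ⟨h, hAB, hh⟩ := exists_homeomorph_image_eq_of_isGδ (hA.image _) (hB.image _)
    (hclosure hBd) (hclosure hAd) hG hABG
  have hhZ (x : ℕ → α) : x ∈ Z ↔ h x ∈ Z := by
    constructor <;> intro hx <;> by_contra hx'
    · exact hx' (htail (hh x (Or.inr fun hG => hx' (hGZ hG))).symm hx)
    · exact hx' (htail (hh x (Or.inl fun hG => hx' (hGZ hG))) hx)
  refine ⟨h.subtype hhZ, Subtype.val_injective.image_injective ?_⟩
  rw [← hAB, image_image, image_image]
  rfl

theorem CountablyControlled.isCDH_pi {Z : Set (ℕ → α)} (hZ : CountablyControlled Z)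
    (htail : IsTailSet Z) : IsCDH (ℕ → Z) :=
  .of_homeomorph (rowsHomeomorph Z) <|
    CountablyControlled.isCDH (.iInter fun i => hZ.preimage (continuous_row i)) htail.iInter_row

end Power

section LambdaPrime

variable {W : Type*} [TopologicalSpace W]

/-- A subset `Y` of a space is a λ'-set (relative to that space) if every countable set `D` of the
space, contained in `Y` or not, is relatively Gδ in `Y ∪ D`. -/
def IsLambdaPrime (Y : Set W) : Prop :=
  ∀ D : Set W, D.Countable → ∃ G, IsGδ G ∧ D ⊆ G ∧ G ∩ Y ⊆ D

theorem IsLambdaPrime.countablyControlled_compl {Y : Set W} (hY : IsLambdaPrime Y) :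
    CountablyControlled Yᶜ := fun D hDY hD => by
  obtain ⟨G, hG, hDG, hGY⟩ := hY D hD
  exact ⟨G, hG, hDG, fun x hxG hxY => hDY (hGY ⟨hxG, hxY⟩) hxY⟩

theorem not_isGδ_of_countable_of_dense {X : Type*} [TopologicalSpace X] [BaireSpace X] [T1Space X]
    [PerfectSpace X] [Nonempty X] {Q : Set X} (hQ : Q.Countable) (hQd : Dense Q) : ¬IsGδ Q := by
  intro hGδ
  have hdense : Dense (⋂ x ∈ Q, ({x}ᶜ : Set X)) :=
    dense_biInter_of_isOpen (fun x _ => isOpen_compl_singleton) hQ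
      fun x _ => dense_compl_singleton x
  have hcompl : ⋂ x ∈ Q, ({x}ᶜ : Set X) = Qᶜ := by
    rw [← compl_iUnion₂, biUnion_of_singleton]
  rw [hcompl] at hdense
  obtain ⟨x, hxQ, hx⟩ := (hQd.inter_of_Gδ hGδ hQ.isGδ_compl hdense).nonempty
  exact hx hxQ

instance perfectSpace_pi_nat {α : Type*} [TopologicalSpace α] [Nontrivial α] :
    PerfectSpace (ℕ → α) := by
  refine perfectSpace_iff_forall_not_isolated.2 fun x => ?_
  choose b hb using fun n => exists_ne (x n)
  have hlim : Tendsto (fun n => Function.update x n (b n)) atTop (𝓝[≠] x) :=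
    tendsto_nhdsWithin_iff.2 ⟨tendsto_of_mem_cylinder tendsto_id fun n =>
      update_mem_cylinder x n (b n), .of_forall fun n => Function.update_ne_self_iff.2 (hb n)⟩
  exact hlim.neBot

theorem exists_nat_bool_injection_of_measurableSet [PolishSpace W] [MeasurableSpace W]
    [BorelSpace W] {Y : Set W} (hm : MeasurableSet Y) (hunc : ¬Y.Countable) :
    ∃ f : (ℕ → Bool) → W, range f ⊆ Y ∧ Continuous f ∧ Function.Injective f := by
  rcases hm.isClopenable with ⟨t, ht, hpolish, hclosed, -⟩
  obtain ⟨f, hfY, hf, hfinj⟩ :=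
    @IsClosed.exists_nat_bool_injection_of_not_countable W t hpolish Y hclosed hunc
  exact ⟨f, hfY, continuous_le_rng ht hf, hfinj⟩

theorem IsLambdaPrime.countable_of_measurableSet [PolishSpace W] [MeasurableSpace W]
    [BorelSpace W] {Y : Set W} (hY : IsLambdaPrime Y) (hm : MeasurableSet Y) : Y.Countable := by
  by_contra hunc
  obtain ⟨f, hfY, hf, hfinj⟩ := exists_nat_bool_injection_of_measurableSet hm hunc
  obtain ⟨Q, hQ, hQd⟩ := TopologicalSpace.exists_countable_dense (ℕ → Bool)
  obtain ⟨G, hG, hQG, hGY⟩ := hY (f '' Q) (hQ.image f)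
  have hGQ : f ⁻¹' G = Q := by
    refine Subset.antisymm (fun x hx => ?_) (image_subset_iff.1 hQG)
    exact hfinj.mem_set_image.1 (hGY ⟨hx, hfY (mem_range_self x)⟩)
  exact not_isGδ_of_countable_of_dense hQ hQd (hGQ ▸ hG.preimage hf)

theorem IsLambdaPrime.not_polishSpace_compl [PolishSpace W] {Y : Set W} (hY : IsLambdaPrime Y)
    (hunc : ¬Y.Countable) : ¬PolishSpace (Yᶜ : Set W) := fun _ => by
  borelize W
  have hcompl : MeasurableSet Yᶜ := by
    rw [← Subtype.range_coe (s := Yᶜ)]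
    exact MeasureTheory.measurableSet_range_of_continuous_injective continuous_subtype_val
      Subtype.val_injective
  exact hunc (hY.countable_of_measurableSet hcompl.of_compl)

end LambdaPrime

section BoundingNumber

/-- A family of functions is eventually bounded if a single function dominates all its members
modulo finite sets. -/
def EventuallyBounded (S : Set (ℕ → ℕ)) : Prop :=
  ∃ g, ∀ f ∈ S, f ≤ᶠ[atTop] g

/-- The bounding number `𝔟`, the least cardinality of a family of functions that is not eventually
bounded. -/
noncomputable def boundingNumber : Cardinal.{0} :=
  sInf {κ | ∃ S : Set (ℕ → ℕ), #S = κ ∧ ¬EventuallyBounded S}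

theorem eventuallyBounded_of_countable {S : Set (ℕ → ℕ)} (hS : S.Countable) :
    EventuallyBounded S := by
  rcases S.eq_empty_or_nonempty with rfl | hne
  · exact ⟨0, fun f hf => hf.elim⟩
  obtain ⟨f, rfl⟩ := hS.exists_eq_range hne
  refine ⟨fun n => partialSups f n n, forall_mem_range.2 fun k => ?_⟩
  filter_upwards [eventually_ge_atTop k] with n hn
  exact le_partialSups_of_le f hn n

theorem eventuallyBounded_of_mk_lt {S : Set (ℕ → ℕ)} (hS : #S < boundingNumber) :
    EventuallyBounded S := by
  by_contra h
  exact notMem_of_lt_csInf' hS ⟨S, rfl, h⟩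

theorem exists_mk_eq_boundingNumber :
    ∃ S : Set (ℕ → ℕ), #S = boundingNumber ∧ ¬EventuallyBounded S := by
  refine csInf_mem (s := {κ | ∃ S : Set (ℕ → ℕ), #S = κ ∧ ¬EventuallyBounded S})
    ⟨_, univ, rfl, fun ⟨g, hg⟩ => ?_⟩
  obtain ⟨n, hn⟩ := (hg (g + 1) (mem_univ _)).exists
  exact Nat.not_succ_le_self _ hn

theorem aleph0_lt_boundingNumber : ℵ₀ < boundingNumber := by
  obtain ⟨S, hS, hunb⟩ := exists_mk_eq_boundingNumber
  rw [← hS, ← not_le, Cardinal.le_aleph0_iff_set_countable]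
  exact fun h => hunb (eventuallyBounded_of_countable h)

theorem exists_forall_le_max_of_eventuallyLE {f g : ℕ → ℕ} (h : f ≤ᶠ[atTop] g) :
    ∃ N, ∀ n, f n ≤ max (g n) N := by
  obtain ⟨M, hM⟩ := eventually_atTop.1 h
  refine ⟨partialSups f M, fun n => ?_⟩
  rcases le_total n M with hn | hn
  · exact le_max_of_le_right (le_partialSups_of_le f hn)
  · exact le_max_of_le_left (hM n hn)

theorem isLambdaPrime_of_mk_lt {W : Type} [TopologicalSpace W] [FirstCountableTopology W]
    [T1Space W] {Y : Set W} (hY : #Y < boundingNumber) : IsLambdaPrime Y := fun D hD => by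
  rcases D.eq_empty_or_nonempty with rfl | hne
  · exact ⟨∅, .empty, Subset.rfl, inter_subset_left⟩
  obtain ⟨d, rfl⟩ := hD.exists_eq_range hne
  choose U hU hbasis using fun n => (nhds_basis_opens (d n)).exists_antitone_subbasis
  have hmiss : ∀ y, ∃ g : ℕ → ℕ, y ∉ range d → ∀ n, y ∉ U n (g n) := fun y => by
    by_cases hy : y ∈ range d
    · exact ⟨0, fun h => (h hy).elim⟩
    have hne n : ∃ m, y ∉ U n m := by
      obtain ⟨m, hm⟩ := (hbasis n).mem_iff.1 (compl_singleton_mem_nhds fun h => hy ⟨n, h⟩)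
      exact ⟨m, fun h => hm h rfl⟩
    choose g hg using hne
    exact ⟨g, fun _ => hg⟩
  choose g hg using hmiss
  obtain ⟨b, hb⟩ := eventuallyBounded_of_mk_lt (mk_image_le.trans_lt hY : #(g '' Y) < _)
  refine ⟨⋂ N, ⋃ n, U n (max (b n) N), .iInter_of_isOpen fun N => isOpen_iUnion fun n =>
    (hU n _).2, range_subset_iff.2 fun n => mem_iInter.2 fun N => mem_iUnion.2
    ⟨n, (hU n _).1⟩, fun y ⟨hyG, hyY⟩ => ?_⟩
  by_contra hyD
  obtain ⟨N, hN⟩ := exists_forall_le_max_of_eventuallyLE (hb _ (mem_image_of_mem g hyY))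
  obtain ⟨n, hn⟩ := mem_iUnion.1 (mem_iInter.1 hyG N)
  exact hg y hyD n ((hbasis n).antitone (hN n) hn)

theorem mk_tailSaturation_lt {α : Type*} [Countable α] {S : Set (ℕ → α)} {κ : Cardinal}
    (hκ : ℵ₀ < κ) (hS : #S < κ) : #(tailSaturation S) < κ := by
  rw [tailSaturation_eq_biUnion]
  refine (mk_biUnion_le _ _).trans_lt (mul_lt_of_lt hκ.le hS (lt_of_le_of_lt ?_ hκ))
  exact ciSup_le' fun s => (countable_setOf_eventuallyEq s.1).le_aleph0

theorem isGδ_setOf_not_eventuallyLE (e : ℕ → ℕ) : IsGδ {x : ℕ → ℕ | ¬e ≤ᶠ[atTop] x} := by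
  have heq : {x : ℕ → ℕ | ¬e ≤ᶠ[atTop] x} = ⋂ N, ⋃ n ≥ N, {x | x n < e n} := by
    ext x
    simp only [EventuallyLE, not_eventually, frequently_atTop, not_le, mem_ofPred_eq, mem_iInter,
      mem_iUnion, exists_prop]
  rw [heq]
  exact .iInter_of_isOpen fun N => isOpen_biUnion fun n _ =>
    isOpen_lt (continuous_apply n) continuous_const

theorem exists_unbounded_dominated :
    ∃ (I : Type) (_ : LinearOrder I) (e f : I → ℕ → ℕ), (∀ i : I, #(Iio i) < boundingNumber) ∧
      ¬EventuallyBounded (range e) ∧ ∀ i j, i ≤ j → e i ≤ᶠ[atTop] f j := by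
  obtain ⟨S, hS, hunb⟩ := exists_mk_eq_boundingNumber
  let I := boundingNumber.ord.ToType
  have hmk : #I = boundingNumber := mk_ord_toType _
  have hI (i : I) : #(Iio i) < boundingNumber :=
    (mk_Iio_lt i (by rw [hmk, Ordinal.type_toType])).trans_eq hmk
  obtain ⟨e⟩ : Nonempty (I ≃ S) := Cardinal.eq.1 (hmk.trans hS.symm)
  have hbdd (j : I) : EventuallyBounded ((fun i => (e i).1) '' Iic j) := by
    refine eventuallyBounded_of_mk_lt (mk_image_le.trans_lt ?_)
    rw [← Iio_insert]
    exact mk_insert_le.trans_lt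
      (add_lt_of_lt aleph0_lt_boundingNumber.le (hI j)
        (one_lt_aleph0.trans aleph0_lt_boundingNumber))
  choose f hf using hbdd
  refine ⟨I, inferInstance, fun i => (e i).1, f, hI, ?_, fun i j hij => hf j _ ⟨i, hij, rfl⟩⟩
  rwa [← Function.comp_def, e.surjective.range_comp, Subtype.range_coe]

variable {I : Type} {e f : I → ℕ → ℕ}

theorem not_countable_tailSaturation_range (he : ¬EventuallyBounded (range e))
    (hef : ∀ i, e i ≤ᶠ[atTop] f i) : ¬(tailSaturation (range f)).Countable := fun hcount => by
  obtain ⟨g, hg⟩ := eventuallyBounded_of_countable (hcount.mono (subset_tailSaturation _))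
  exact he ⟨g, forall_mem_range.2 fun i => (hef i).trans (hg _ (mem_range_self i))⟩

theorem isLambdaPrime_tailSaturation_range [LinearOrder I] (hI : ∀ i : I, #(Iio i) < boundingNumber)
    (he : ¬EventuallyBounded (range e)) (hef : ∀ i j, i ≤ j → e i ≤ᶠ[atTop] f j) :
    IsLambdaPrime (tailSaturation (range f)) := fun D hD => by
  obtain ⟨g, hg⟩ := eventuallyBounded_of_countable hD
  obtain ⟨i, hi⟩ : ∃ i, ¬e i ≤ᶠ[atTop] g := by
    by_contra! h
    exact he ⟨g, forall_mem_range.2 h⟩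
  obtain ⟨G, hG, hDG, hGY⟩ := isLambdaPrime_of_mk_lt (mk_tailSaturation_lt
    aleph0_lt_boundingNumber (mk_image_le.trans_lt (hI i) : #(f '' Iio i) < _)) D hD
  refine ⟨{x | ¬e i ≤ᶠ[atTop] x} ∩ G, (isGδ_setOf_not_eventuallyLE _).inter hG,
    fun d hd => ⟨fun hid => hi (hid.trans (hg d hd)), hDG hd⟩, ?_⟩
  rintro x ⟨⟨hix, hxG⟩, _, ⟨j, rfl⟩, hxj⟩
  have hji : j < i := not_le.1 fun hij => hix ((hef i j hij).trans hxj.symm.le)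
  exact hGY ⟨hxG, f j, mem_image_of_mem f hji, hxj⟩

theorem exists_isTailSet_isLambdaPrime_not_countable :
    ∃ Y : Set (ℕ → ℕ), IsTailSet Y ∧ IsLambdaPrime Y ∧ ¬Y.Countable := by
  obtain ⟨I, _, e, f, hI, he, hef⟩ := exists_unbounded_dominated
  exact ⟨tailSaturation (range f), isTailSet_tailSaturation _,
    isLambdaPrime_tailSaturation_range hI he hef,
    not_countable_tailSaturation_range he fun i => hef i i le_rfl⟩

end BoundingNumber

theorem exists_isEmbedding_nat_nat_nat_bool :
    ∃ g : (ℕ → ℕ) → ℕ → Bool, IsEmbedding g := by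
  let φ (n k : ℕ) : Bool := decide (n = k)
  have hφ : IsEmbedding φ := by
    refine (isInducing_iff_nhds.2 fun n => le_antisymm
      (continuous_of_discreteTopology.tendsto n).le_comap ?_).isEmbedding
    have hopen : IsOpen ((fun x : ℕ → Bool => x n) ⁻¹' {true}) :=
      (isOpen_discrete {true}).preimage (continuous_apply n)
    rw [nhds_discrete ℕ, le_pure_iff]
    exact ⟨_, hopen.mem_nhds (decide_eq_true rfl), fun m hm => of_decide_eq_true hm⟩
  have hrows : IsEmbedding (ofRows : (ℕ → ℕ → Bool) → ℕ → Bool) :=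
    Function.LeftInverse.isEmbedding (f := fun z i => row i z) (fun x => funext (row_ofRows x))
      (continuous_pi continuous_row) continuous_ofRows
  exact ⟨_, hrows.comp (.piMap fun _ => hφ)⟩

/-- There exists a subspace `X` of the Cantor set `2^ω` such that `X` is not
Polish and `X^ω` is countable dense homogeneous. -/
theorem statement14 :
    ∃ X : Set (ℕ → Bool), ¬ PolishSpace X ∧ IsCDH (ℕ → X) := by
  obtain ⟨Y, htail, hY, hunc⟩ := exists_isTailSet_isLambdaPrime_not_countable
  obtain ⟨g, hg⟩ := exists_isEmbedding_nat_nat_nat_bool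
  let e : (Yᶜ : Set (ℕ → ℕ)) ≃ₜ g '' Yᶜ := hg.homeomorphImage Yᶜ
  refine ⟨g '' Yᶜ, fun _ => hY.not_polishSpace_compl hunc e.isClosedEmbedding.polishSpace, ?_⟩
  exact (hY.countablyControlled_compl.isCDH_pi htail.compl).of_homeomorph
    (.piCongrRight fun _ => e.symm)
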